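/- arXiv:2405.02405 — 2 statements merged into one kernel-verified Lean document; each statement's English description precedes it below -/
import Mathlib

section
/- Let θ, f̃ ∈ H²(𝔻²), and suppose θ acts as an isometric multiplier on H²(𝔻²). Let f = θ·f̃ and suppose f(0) ≠ 0. Then for every n ≥ 0 there exists a complex constant c such that p_n*[f] = c · p_n*[f̃]. -/
noncomputable section

open Finset

/-- Coefficients of a formal power series in two variables `z, w`
(the coefficient of `z^j w^k` is the value at `(j, k)`). -/
abbrev Coef := ℕ × ℕ → ℂ

/-- Coefficients of a formal power series in one variable. -/
abbrev Coef1 := ℕ → ℂ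

/-- Membership in the Hardy space `H²(𝔻²)`: square-summable coefficients. -/
def MemH2 (f : Coef) : Prop := Summable (fun jk : ℕ × ℕ => ‖f jk‖ ^ 2)

/-- Membership in the Hardy space `H²(𝔻)`. -/
def MemH2₁ (f : Coef1) : Prop := Summable (fun j : ℕ => ‖f j‖ ^ 2)

/-- The `H²(𝔻²)` inner product `⟨f, g⟩ = ∑ a_{jk} conj (b_{jk})`. -/
def Hinner (f g : Coef) : ℂ := ∑' jk : ℕ × ℕ, f jk * (starRingEnd ℂ) (g jk)

/-- The `H²(𝔻²)` norm. -/
def Hnorm (f : Coef) : ℝ := Real.sqrt (∑' jk : ℕ × ℕ, ‖f jk‖ ^ 2)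

/-- The `H²(𝔻)` norm. -/
def Hnorm1 (f : Coef1) : ℝ := Real.sqrt (∑' j : ℕ, ‖f j‖ ^ 2)

/-- The constant function `1` as an element of `H²(𝔻²)`. -/
def oneH : Coef := fun jk => if jk = (0, 0) then 1 else 0

/-- The constant function `1` as an element of `H²(𝔻)`. -/
def oneH1 : Coef1 := fun j => if j = 0 then 1 else 0

/-- Cauchy product `q·f` of two formal power series in two variables
(used for multiplication of `f ∈ H²(𝔻²)` by a polynomial `q`). -/
def pmul (q f : Coef) : Coef := fun jk =>
  ∑ a ∈ range (jk.1 + 1), ∑ b ∈ range (jk.2 + 1), q (a, b) * f (jk.1 - a, jk.2 - b)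

/-- Multiplication of a one-variable power series by a one-variable polynomial. -/
def pmul1 (q : Polynomial ℂ) (f : Coef1) : Coef1 := fun j =>
  ∑ a ∈ range (j + 1), q.coeff a * f (j - a)

/-- Degree-lexicographic enumeration of the monomials in `z, w`:
`chi 0 = (0,0) ↔ 1`, `chi 1 = (1,0) ↔ z`, `chi 2 = (0,1) ↔ w`,
`chi 3 = (2,0) ↔ z²`, `chi 4 = (1,1) ↔ zw`, `chi 5 = (0,2) ↔ w²`, … -/
def chi : ℕ → ℕ × ℕ
  | 0 => (0, 0)
  | n + 1 =>
    let p := chi n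
    if p.1 = 0 then (p.2 + 1, 0) else (p.1 - 1, p.2 + 1)

/-- The monomial `z^(ab.1) w^(ab.2)` as a coefficient function. -/
def mono (ab : ℕ × ℕ) : Coef := fun jk => if jk = ab then 1 else 0

/-- `p` lies in `P_n = span {χ_0, …, χ_n}`. -/
def inPn (n : ℕ) (p : Coef) : Prop := ∀ ab, p ab ≠ 0 → ∃ k ≤ n, chi k = ab

/-- `p` is a (two-variable) polynomial: finitely many nonzero coefficients. -/
def IsPoly2 (p : Coef) : Prop := (Function.support p).Finite

/-- Evaluation of a power series at the point `(z, w)`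
(absolutely convergent for `f ∈ H²(𝔻²)` and `(z,w)` in the open bidisk,
and for any polynomial at any point). -/
def heval (f : Coef) (z w : ℂ) : ℂ := ∑' jk : ℕ × ℕ, f jk * z ^ jk.1 * w ^ jk.2

/-- `p` is the `n`-th optimal polynomial approximant to `1/f`:
`p ∈ P_n` and `p` minimizes `‖qf - 1‖` over `q ∈ P_n`. -/
def IsOPA (f : Coef) (n : ℕ) (p : Coef) : Prop :=
  inPn n p ∧ ∀ q : Coef, inPn n q →
    Hnorm (pmul p f - oneH) ≤ Hnorm (pmul q f - oneH)

/-- `q` has bidegree `(N, M)`: degree `N` in `z` and degree `M` in `w`. -/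
def HasBidegree (q : Coef) (N M : ℕ) : Prop :=
  (∀ a b : ℕ, q (a, b) ≠ 0 → a ≤ N ∧ b ≤ M) ∧ (∃ b, q (N, b) ≠ 0) ∧ (∃ a, q (a, M) ≠ 0)

/-- Reflection of a polynomial of bidegree `(N, M)`:
the coefficient of `z^j w^k` is `conj` of the coefficient of `z^(N-j) w^(M-k)`. -/
def reflPoly (N M : ℕ) (q : Coef) : Coef := fun jk =>
  if jk.1 ≤ N ∧ jk.2 ≤ M then (starRingEnd ℂ) (q (N - jk.1, M - jk.2)) else 0

/-- The degree-lexicographic index of the monomial `z^(ab.1) w^(ab.2)`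
(the inverse of `chi`). -/
def lexIndex (ab : ℕ × ℕ) : ℕ := (ab.1 + ab.2) * (ab.1 + ab.2 + 1) / 2 + ab.2

/-- `pound k j` = the degree-lexicographic index `£(k,j)` of the monomial `(χ_k)^j`. -/
def pound (k j : ℕ) : ℕ := lexIndex (j * (chi k).1, j * (chi k).2)

/-- The linear factor `z - α` as a coefficient function. -/
def linZ (α : ℂ) : Coef := fun jk => if jk = (1, 0) then 1 else if jk = (0, 0) then -α else 0

/-- The linear factor `w - β` as a coefficient function. -/
def linW (β : ℂ) : Coef := fun jk => if jk = (0, 1) then 1 else if jk = (0, 0) then -β else 0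

/-!
Multiplication by `θ` is an isometry `T` of `H²(𝔻²)`, and comparing constant coefficients gives
`T* 1 = conj (θ 0) • 1`. The optimal approximants are determined by the normal equations
`⟪r f, p f⟫ = ⟪r f, 1⟫` for all `r ∈ P_n`. As `r (θ f̃) = T (r f̃)`, the normal equations for `θ f̃`
read `⟪r f̃, p f̃⟫ = conj (θ 0) ⟪r f̃, 1⟫`; these are the ones for `f̃`, scaled by `conj (θ 0)`.
-/

open scoped ComplexConjugate InnerProductSpace PowerSeries

section NormalEquations

variable {𝕜 V E : Type*} [RCLike 𝕜] [AddCommGroup V] [Module 𝕜 V]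
  [NormedAddCommGroup E] [InnerProductSpace 𝕜 E]

lemma inner_map_eq_inner_of_forall_norm_sub_le (A : V →ₗ[𝕜] E) {e : E} {p : V}
    (hp : ∀ r, ‖A p - e‖ ≤ ‖A r - e‖) (r : V) : ⟪A r, A p⟫_𝕜 = ⟪A r, e⟫_𝕜 := by
  have norm_eq_iInf : ‖e - A p‖ = ⨅ w : A.range, ‖e - w‖ := by
    refine le_antisymm (le_ciInf ?_) (ciInf_le ⟨0, ?_⟩ (⟨A p, A.mem_range_self p⟩ : A.range))
    · rintro ⟨_, s, rfl⟩
      simpa only [norm_sub_rev e] using hp s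
    · rintro _ ⟨w, rfl⟩
      exact norm_nonneg _
  have orthogonal : ⟪e - A p, A r⟫_𝕜 = 0 :=
    (A.range.norm_eq_iInf_iff_inner_eq_zero
      (A.mem_range_self p)).1 norm_eq_iInf _ (A.mem_range_self r)
  rw [inner_eq_zero_symm, inner_sub_right, sub_eq_zero] at orthogonal
  exact orthogonal.symm

/-- The hypothesis `hT` says `T* e = c • e`, without requiring `T` to have an adjoint. -/
lemma eq_smul_of_forall_norm_isometry_comp_sub_le (A : V →ₗ[𝕜] E) (hA : Function.Injective A)
    (T : E →ₗᵢ[𝕜] E) {e : E} {c : 𝕜} (hT : ∀ x, ⟪T x, e⟫_𝕜 = c * ⟪x, e⟫_𝕜) {p q : V}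
    (hp : ∀ r, ‖T (A p) - e‖ ≤ ‖T (A r) - e‖) (hq : ∀ r, ‖A q - e‖ ≤ ‖A r - e‖) :
    p = c • q := by
  have inner_eq (r : V) : ⟪A r, A p⟫_𝕜 = ⟪A r, A (c • q)⟫_𝕜 :=
    calc ⟪A r, A p⟫_𝕜
      _ = ⟪T (A r), T (A p)⟫_𝕜 := (T.inner_map_map _ _).symm
      _ = ⟪T (A r), e⟫_𝕜 :=
          inner_map_eq_inner_of_forall_norm_sub_le (T.toLinearMap ∘ₗ A) hp r
      _ = c * ⟪A r, e⟫_𝕜 := hT _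
      _ = c * ⟪A r, A q⟫_𝕜 := by rw [inner_map_eq_inner_of_forall_norm_sub_le A hq]
      _ = ⟪A r, A (c • q)⟫_𝕜 := by rw [map_smul, inner_smul_right]
  have inner_self : ⟪A (p - c • q), A (p - c • q)⟫_𝕜 = 0 := by
    rw [map_sub A p, inner_sub_right, ← map_sub, inner_eq, sub_self]
  exact sub_eq_zero.1 <| hA <| by rw [inner_self_eq_zero.1 inner_self, map_zero]

end NormalEquations

section CauchyProduct

/-- The coefficient family `f` as a power series in `z` over power series in `w`; it carries
`pmul` to the product of an integral domain. -/
def toPowerSeries (f : Coef) : ℂ⟦X⟧⟦X⟧ :=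
  PowerSeries.mk fun j => PowerSeries.mk fun k => f (j, k)

lemma toPowerSeries_injective : Function.Injective toPowerSeries := by
  intro f g h
  ext ⟨j, k⟩
  simpa [toPowerSeries] using congr(PowerSeries.coeff k (PowerSeries.coeff j $h))

lemma toPowerSeries_pmul (f g : Coef) :
    toPowerSeries (pmul f g) = toPowerSeries f * toPowerSeries g := by
  ext j k
  simp [toPowerSeries, pmul, PowerSeries.coeff_mul,
    Finset.Nat.sum_antidiagonal_eq_sum_range_succ_mk]

lemma pmul_left_comm (f g h : Coef) : pmul f (pmul g h) = pmul g (pmul f h) :=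
  toPowerSeries_injective <| by simp only [toPowerSeries_pmul, mul_left_comm]

lemma pmul_left_injective {f : Coef} (hf : f ≠ 0) : Function.Injective (pmul · f) := by
  have hf' : toPowerSeries f ≠ 0 := fun h =>
    hf <| toPowerSeries_injective <| h.trans <| by ext; simp [toPowerSeries]
  intro p q h
  apply toPowerSeries_injective
  apply mul_right_cancel₀ hf'
  simpa only [toPowerSeries_pmul] using congrArg toPowerSeries h

/-- The Cauchy product `pmul` as a bilinear map. -/
def pmulLinear : Coef →ₗ[ℂ] Coef →ₗ[ℂ] Coef :=
  LinearMap.mk₂ ℂ pmul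
    (fun p q f => by ext; simp [pmul, add_mul, Finset.sum_add_distrib])
    (fun c p f => by ext; simp [pmul, Finset.mul_sum, mul_assoc])
    (fun p f g => by ext; simp [pmul, mul_add, Finset.sum_add_distrib])
    (fun c p f => by ext; simp [pmul, Finset.mul_sum, mul_left_comm])

lemma pmul_mono_eq_extend (ab : ℕ × ℕ) (f : Coef) :
    pmul (mono ab) f = Function.extend (· + ab) f 0 := by
  obtain ⟨a, b⟩ := ab
  ext ⟨j, k⟩
  have pmul_apply : pmul (mono (a, b)) f (j, k) =
      if a ≤ j ∧ b ≤ k then f (j - a, k - b) else 0 := by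
    simp [pmul, mono, ite_and, Finset.sum_ite_irrel]
  rw [pmul_apply]
  split_ifs with h
  · conv_rhs => rw [← tsub_add_cancel_of_le (show (a, b) ≤ (j, k) from h)]
    exact ((add_left_injective (a, b)).extend_apply f 0 _).symm
  · rw [Function.extend_apply' _ _ _ fun ⟨i, hi⟩ => h (le_of_le_of_eq le_add_self hi)]
    rfl

lemma IsPoly2.eq_sum_mono {p : Coef} (hp : IsPoly2 p) :
    p = ∑ ab ∈ hp.toFinset, p ab • mono ab := by
  ext jk
  simpa [mono, Finset.sum_apply] using not_imp_comm.1 (hp.mem_toFinset (a := jk)).2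

end CauchyProduct

section HardySpace

/-- The Hardy space `H²(𝔻²)` as the Hilbert space of its coefficient families. -/
abbrev HardySpace : Type := lp (fun _ : ℕ × ℕ => ℂ) 2

lemma memH2_iff_memℓp {f : Coef} : MemH2 f ↔ Memℓp f 2 := by
  simp [MemH2, memℓp_gen_iff (p := 2) (by norm_num)]

lemma HardySpace.memH2 (f : HardySpace) : MemH2 f :=
  memH2_iff_memℓp.2 (lp.memℓp f)

lemma HardySpace.norm_eq_Hnorm (f : HardySpace) : ‖f‖ = Hnorm f := by
  rw [lp.norm_eq_tsum_rpow (by norm_num), Hnorm, Real.sqrt_eq_rpow]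
  simp

/-- The constant function `1` as an element of `H²(𝔻²)`. -/
def HardySpace.one : HardySpace := lp.single 2 (0, 0) 1

lemma HardySpace.coe_one : ⇑HardySpace.one = oneH := by
  ext jk
  simp [HardySpace.one, oneH, Pi.single_apply]

lemma HardySpace.inner_one_right (f : HardySpace) :
    ⟪f, HardySpace.one⟫_ℂ = conj (f (0, 0)) := by
  simp [HardySpace.one, lp.inner_single_right]

lemma MemH2.pmul_mono {f : Coef} (hf : MemH2 f) (ab : ℕ × ℕ) : MemH2 (pmul (mono ab) f) := by
  have sq_norm_extend : (fun jk => ‖pmul (mono ab) f jk‖ ^ 2) =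
      Function.extend (· + ab) (fun jk => ‖f jk‖ ^ 2) 0 := by
    ext jk
    rw [pmul_mono_eq_extend, Function.apply_extend (fun x : ℂ => ‖x‖ ^ 2)]
    congr 1; ext; simp
  rw [MemH2, sq_norm_extend]
  exact (summable_extend_zero (add_left_injective ab)).2 hf

lemma IsPoly2.memH2_pmul {p f : Coef} (hp : IsPoly2 p) (hf : MemH2 f) : MemH2 (pmul p f) := by
  have pmul_eq_sum : pmul p f = ∑ ab ∈ hp.toFinset, p ab • pmul (mono ab) f := by
    simpa [pmulLinear] using congr(pmulLinear $(hp.eq_sum_mono) f)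
  rw [pmul_eq_sum, memH2_iff_memℓp, Finset.sum_fn]
  exact Memℓp.finsetSum _ fun ab _ => (memH2_iff_memℓp.1 (hf.pmul_mono ab)).const_smul (p ab)

/-- The space `P_n` of polynomials spanned by the monomials `χ_0, …, χ_n`. -/
def polynomialSpace (n : ℕ) : Submodule ℂ Coef where
  carrier := {p | inPn n p}
  zero_mem' := fun _ h => absurd rfl h
  add_mem' := by
    intro p q hp hq ab h
    by_cases hpab : p ab = 0
    · exact hq ab (by simpa [hpab] using h)
    · exact hp ab hpab
  smul_mem' := fun _ _ hp ab h => hp ab (right_ne_zero_of_mul h)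

lemma inPn.isPoly2 {n : ℕ} {p : Coef} (hp : inPn n p) : IsPoly2 p :=
  ((Set.finite_Iic n).image chi).subset hp

/-- The map `p ↦ p f` from `P_n` to `H²(𝔻²)`. The optimal approximants to `1 / f` are the least
squares solutions of `p f = 1`. -/
def polynomialMul (n : ℕ) (f : HardySpace) : polynomialSpace n →ₗ[ℂ] HardySpace where
  toFun p := ⟨pmul p f, memH2_iff_memℓp.1 (p.2.isPoly2.memH2_pmul f.memH2)⟩
  map_add' _ _ := Subtype.ext (pmulLinear.map_add₂ _ _ _)
  map_smul' _ _ := Subtype.ext (pmulLinear.map_smul₂ _ _ _)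

lemma polynomialMul_injective (n : ℕ) {f : HardySpace} (hf : f ≠ 0) :
    Function.Injective (polynomialMul n f) := fun _ _ h =>
  Subtype.ext <| pmul_left_injective (fun h0 => hf (lp.ext h0)) congr(⇑$h)

lemma IsOPA.norm_polynomialMul_sub_le {f : HardySpace} {n : ℕ} {p : Coef} (hp : IsOPA f n p)
    (r : polynomialSpace n) :
    ‖polynomialMul n f ⟨p, hp.1⟩ - HardySpace.one‖ ≤ ‖polynomialMul n f r - HardySpace.one‖ := by
  simp only [HardySpace.norm_eq_Hnorm, lp.coeFn_sub, HardySpace.coe_one]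
  exact hp.2 r r.2

end HardySpace

section IsometricMultiplier

/-- Multiplication by `θ` maps `H²(𝔻²)` isometrically into itself, as it does for inner `θ`. -/
def IsIsometricMultiplier (θ : Coef) : Prop :=
  ∀ g : Coef, MemH2 g → MemH2 (pmul θ g) ∧ Hnorm (pmul θ g) = Hnorm g

variable {θ : Coef}

/-- The isometry `g ↦ θ g` of `H²(𝔻²)` induced by an isometric multiplier `θ`. -/
def IsIsometricMultiplier.toLinearIsometry (hθ : IsIsometricMultiplier θ) :
    HardySpace →ₗᵢ[ℂ] HardySpace where
  toFun g := ⟨pmul θ g, memH2_iff_memℓp.1 (hθ g g.memH2).1⟩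
  map_add' _ _ := Subtype.ext ((pmulLinear θ).map_add _ _)
  map_smul' _ _ := Subtype.ext ((pmulLinear θ).map_smul _ _)
  norm_map' g := by
    rw [HardySpace.norm_eq_Hnorm, HardySpace.norm_eq_Hnorm]
    exact (hθ g g.memH2).2

lemma IsIsometricMultiplier.toLinearIsometry_polynomialMul (hθ : IsIsometricMultiplier θ) {n : ℕ}
    (p : polynomialSpace n) (f : HardySpace) :
    hθ.toLinearIsometry (polynomialMul n f p) = polynomialMul n (hθ.toLinearIsometry f) p :=
  Subtype.ext (pmul_left_comm θ p f)

lemma IsIsometricMultiplier.inner_toLinearIsometry_one (hθ : IsIsometricMultiplier θ)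
    (g : HardySpace) :
    ⟪hθ.toLinearIsometry g, HardySpace.one⟫_ℂ =
      conj (θ (0, 0)) * ⟪g, HardySpace.one⟫_ℂ := by
  have coeff_zero : hθ.toLinearIsometry g (0, 0) = θ (0, 0) * g (0, 0) := by
    simp [IsIsometricMultiplier.toLinearIsometry, pmul]
  simp only [HardySpace.inner_one_right, coeff_zero, map_mul]

end IsometricMultiplier

theorem statement4_general {θ ftilde : Coef} (hθ : IsIsometricMultiplier θ) (hft : MemH2 ftilde)
    (hft0 : ftilde ≠ 0) {n : ℕ} {p q : Coef} (hp : IsOPA (pmul θ ftilde) n p)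
    (hq : IsOPA ftilde n q) : p = conj (θ (0, 0)) • q := by
  let f : HardySpace := ⟨ftilde, memH2_iff_memℓp.1 hft⟩
  have hf : f ≠ 0 := fun h => hft0 congr(⇑$h)
  have p_minimizes (r : polynomialSpace n) :
      ‖hθ.toLinearIsometry (polynomialMul n f ⟨p, hp.1⟩) - HardySpace.one‖ ≤
        ‖hθ.toLinearIsometry (polynomialMul n f r) - HardySpace.one‖ := by
    simp only [hθ.toLinearIsometry_polynomialMul]
    exact IsOPA.norm_polynomialMul_sub_le (f := hθ.toLinearIsometry f) hp r
  exact congrArg Subtype.val <| eq_smul_of_forall_norm_isometry_comp_sub_le (polynomialMul n f)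
    (polynomialMul_injective n hf) hθ.toLinearIsometry hθ.inner_toLinearIsometry_one p_minimizes
    (IsOPA.norm_polynomialMul_sub_le (f := f) hq)

/-- If `θ ∈ H²(𝔻²)` acts as an isometric multiplier and `f = θ·f̃` with
`f(0) ≠ 0`, then for every `n` there is a constant `c` with `p_n*[f] = c · p_n*[f̃]`. -/
theorem statement4 (θ ftilde : Coef) (hθ : MemH2 θ) (hft : MemH2 ftilde)
    (hiso : ∀ g : Coef, MemH2 g → MemH2 (pmul θ g) ∧ Hnorm (pmul θ g) = Hnorm g)
    (hf0 : pmul θ ftilde (0, 0) ≠ 0) (n : ℕ)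
    (p q : Coef) (hp : IsOPA (pmul θ ftilde) n p) (hq : IsOPA ftilde n q) :
    ∃ c : ℂ, p = c • q := by
  have hft0 : ftilde ≠ 0 := by
    rintro rfl
    simp [pmul] at hf0
  exact ⟨_, statement4_general hiso hft hft0 hp hq⟩
end
end

section
/- Let M be a closed subspace of H²(𝔻²) that is shift invariant, i.e., z·g ∈ M and w·g ∈ M for every g ∈ M. Let φ be the orthogonal projection of the constant function 1 onto M. Then ⟨φ, z^a w^b φ⟩ = 0 for every pair of nonnegative integers (a,b) ≠ (0,0); that is, φ is weakly inner. -/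
noncomputable section

open Finset

/-!
If `1 - φ ⊥ M`, then `⟨φ, g⟩ = ⟨1, g⟩` is the conjugate of the constant term of `g`, for every
`g ∈ M`. Shift invariance puts `g = z^a w^b φ` in `M`, and its constant term vanishes unless
`(a, b) = (0, 0)`.
-/

/-- `φ` is weakly inner: it is orthogonal to all its nontrivial monomial multiples. Square
summability of `φ` is not part of the definition. -/
def IsWeaklyInner (φ : Coef) : Prop :=
  ∀ a b : ℕ, (a, b) ≠ (0, 0) → Hinner φ (pmul (mono (a, b)) φ) = 0

theorem pmul_mono_apply (p : ℕ × ℕ) (f : Coef) (q : ℕ × ℕ) :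
    pmul (mono p) f q = if p ≤ q then f (q - p) else 0 := by
  obtain ⟨a, b⟩ := p
  obtain ⟨j, k⟩ := q
  simp [pmul, mono, ite_and]

theorem pmul_mono_zero (f : Coef) : pmul (mono 0) f = f := by
  ext q
  simp [pmul_mono_apply]

theorem pmul_mono_add (p q : ℕ × ℕ) (f : Coef) :
    pmul (mono (p + q)) f = pmul (mono p) (pmul (mono q) f) := by
  ext r
  simp only [pmul_mono_apply]
  by_cases hp : p ≤ r
  · simp only [hp, if_true, le_tsub_iff_left hp, tsub_tsub]
  · have hpq : ¬ p + q ≤ r := fun h => hp (le_self_add.trans h)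
    simp only [hp, hpq, if_false]

theorem pmul_mono_apply_zero {p : ℕ × ℕ} (hp : p ≠ 0) (f : Coef) : pmul (mono p) f 0 = 0 := by
  simp [pmul_mono_apply, hp]

theorem pmul_mono_mem {M : Set Coef}
    (hshift : ∀ g ∈ M, pmul (mono (1, 0)) g ∈ M ∧ pmul (mono (0, 1)) g ∈ M)
    {f : Coef} (hf : f ∈ M) (a b : ℕ) : pmul (mono (a, b)) f ∈ M := by
  induction a with
  | zero =>
    induction b with
    | zero => rwa [← Prod.zero_eq_mk, pmul_mono_zero]
    | succ b ih =>
      have hsucc : ((0, b + 1) : ℕ × ℕ) = (0, 1) + (0, b) := by simp [add_comm]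
      rw [hsucc, pmul_mono_add]
      exact (hshift _ ih).2
  | succ a ih =>
    have hsucc : ((a + 1, b) : ℕ × ℕ) = (1, 0) + (a, b) := by simp [add_comm]
    rw [hsucc, pmul_mono_add]
    exact (hshift _ ih).1

theorem memH2_oneH : MemH2 oneH := by
  refine summable_of_ne_finset_zero (s := {(0, 0)}) fun p hp => ?_
  simp [oneH, Finset.notMem_singleton.mp hp]

theorem MemH2.summable_mul_conj {f g : Coef} (hf : MemH2 f) (hg : MemH2 g) :
    Summable fun p => f p * (starRingEnd ℂ) (g p) := by
  refine Summable.of_norm_bounded (hf.add hg) fun p => ?_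
  rw [norm_mul, RCLike.norm_conj]
  linarith [two_mul_le_add_sq ‖f p‖ ‖g p‖, mul_nonneg (norm_nonneg (f p)) (norm_nonneg (g p))]

theorem Hinner_sub_left {f f' g : Coef} (hf : MemH2 f) (hf' : MemH2 f') (hg : MemH2 g) :
    Hinner (f - f') g = Hinner f g - Hinner f' g := by
  simp only [Hinner, Pi.sub_apply, sub_mul]
  exact (hf.summable_mul_conj hg).tsum_sub (hf'.summable_mul_conj hg)

theorem Hinner_oneH_left (g : Coef) : Hinner oneH g = (starRingEnd ℂ) (g 0) := by
  simp [Hinner, oneH, Prod.mk_zero_zero]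

theorem Hinner_eq_conj_apply_zero {φ g : Coef} (hφ : MemH2 φ) (hg : MemH2 g)
    (horth : Hinner (oneH - φ) g = 0) : Hinner φ g = (starRingEnd ℂ) (g 0) := by
  rw [Hinner_sub_left memH2_oneH hφ hg, sub_eq_zero] at horth
  rw [← horth, Hinner_oneH_left]

theorem statement14_general {M : Set Coef} (hmem : ∀ g ∈ M, MemH2 g)
    (hshift : ∀ g ∈ M, pmul (mono (1, 0)) g ∈ M ∧ pmul (mono (0, 1)) g ∈ M)
    {φ : Coef} (hφ : φ ∈ M) (hproj : ∀ g ∈ M, Hinner (oneH - φ) g = 0) :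
    IsWeaklyInner φ := by
  intro a b hab
  have hg : pmul (mono (a, b)) φ ∈ M := pmul_mono_mem hshift hφ a b
  rw [Hinner_eq_conj_apply_zero (hmem φ hφ) (hmem _ hg) (hproj _ hg),
    pmul_mono_apply_zero hab, map_zero]

/-- Let `M ⊆ H²(𝔻²)` be a shift-invariant subspace and let `φ` be the
orthogonal projection of the constant function `1` onto `M` (i.e. `φ ∈ M` and `1 - φ ⊥ M`).
Then `⟨φ, z^a w^b φ⟩ = 0` for every `(a, b) ≠ (0, 0)`; that is, `φ` is weakly inner. -/
theorem statement14 (M : Set Coef) (hmem : ∀ g ∈ M, MemH2 g)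
    (hzero : (0 : Coef) ∈ M)
    (hadd : ∀ g ∈ M, ∀ g' ∈ M, g + g' ∈ M)
    (hsmul : ∀ c : ℂ, ∀ g ∈ M, c • g ∈ M)
    (hshift : ∀ g ∈ M, pmul (mono (1, 0)) g ∈ M ∧ pmul (mono (0, 1)) g ∈ M)
    (φ : Coef) (hφ : φ ∈ M) (hproj : ∀ g ∈ M, Hinner (oneH - φ) g = 0) :
    ∀ a b : ℕ, (a, b) ≠ (0, 0) → Hinner φ (pmul (mono (a, b)) φ) = 0 :=
  statement14_general hmem hshift hφ hproj
end
end
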